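/- (Density recovery at interior points, iterated limit.) Let X ⊆ ℝⁿ be a compact set equal to the closure of its interior, let f : X → ℝ be continuous with 0 < m ≤ f(y) ≤ M < ∞ for all y ∈ X, and let μ be the Borel measure on ℝⁿ with dμ = f dλ on X (so that the support of μ is X). For each x in the interior of X and each ε > 0, let φ_{x,ε} : ℝⁿ → [0, ∞) be measurable with 0 < ∫_{ℝⁿ} φ_{x,ε}² dλ < ∞, and assume the energy-concentration property: for every δ > 0, ∫_{{y : ‖y − x‖ > δ}} φ_{x,ε}² dλ / ∫_{ℝⁿ} φ_{x,ε}² dλ → 0 as ε → 0. For a natural number d define D_{d,ε}(x) := sup { (∫_X φ_{x,ε}(y) p(y) dλ(y))² : p a real polynomial in n variables of total degree at most d with ∫ p² dμ = 1 }. Then for every x in the interior of X, the inner limit L_ε(x) := lim_{d → ∞} D_{d,ε}(x) exists for each ε > 0, equals ∫_X φ_{x,ε}(y)²/f(y) dλ(y), and lim_{ε → 0} [ L_ε(x) / ∫_{ℝⁿ} φ_{x,ε}(y)² dλ(y) ] = 1/f(x). -/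

import Mathlib

open MeasureTheory MvPolynomial Filter

lemma poly_dense {n : ℕ} (X : Set (EuclideanSpace ℝ (Fin n))) (hXc : IsCompact X)
    (g : EuclideanSpace ℝ (Fin n) → ℝ) (hg : Continuous g) (ε : ℝ) (hε : 0 < ε) :
    ∃ p : MvPolynomial (Fin n) ℝ, ∀ y ∈ X, |eval y p - g y| < ε := by
  let c : Fin n → C(EuclideanSpace ℝ (Fin n), ℝ) := fun i => ⟨fun y => y i, by fun_prop⟩
  have key : ∀ (p : MvPolynomial (Fin n) ℝ) (y : EuclideanSpace ℝ (Fin n)),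
      (aeval c p) y = eval y p := by
    intro p y
    induction p using MvPolynomial.induction_on with
    | C a => simp
    | add p q hp hq => simp [hp, hq]
    | mul_X p i hp => simp [hp, c]
  obtain ⟨q, ⟨p, rfl⟩, hp⟩ :=
    ContinuousMap.exists_mem_subalgebra_near_continuous_of_isCompact_of_separatesPoints
    (A := (aeval c : MvPolynomial (Fin n) ℝ →ₐ[ℝ] _).range) (by
      intro x y hxy
      obtain ⟨i, hi⟩ : ∃ i, x i ≠ y i := by
        by_contra! h
        exact hxy (by ext i; exact h i)
      exact ⟨c i, ⟨c i, ⟨MvPolynomial.X i, by simp⟩, rfl⟩, hi⟩) ⟨g, hg⟩ hXc hε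
  refine ⟨p, fun y hy => ?_⟩
  have := hp y hy
  simpa [key] using this

lemma poly_cont {n : ℕ} (p : MvPolynomial (Fin n) ℝ) :
    Continuous (fun y : EuclideanSpace ℝ (Fin n) => eval y p) := by
  have := MvPolynomial.continuous_eval p
  exact this.comp (by fun_prop)

lemma poly_dense_L2 {n : ℕ} (X : Set (EuclideanSpace ℝ (Fin n))) (hXc : IsCompact X)
    (g : EuclideanSpace ℝ (Fin n) → ℝ) (hg : MemLp g 2 (volume.restrict X)) (ε : ℝ) (hε : 0 < ε) :
    ∃ p : MvPolynomial (Fin n) ℝ, ∫ y in X, (g y - eval y p) ^ 2 < ε := by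
  have : IsFiniteMeasure (volume.restrict X : Measure (EuclideanSpace ℝ (Fin n))) :=
    ⟨by simpa using hXc.measure_lt_top⟩
  have h2 : ENNReal.ofReal 2 = 2 := by simp
  obtain ⟨h, -, hh, hhc, hhm⟩ := MemLp.exists_hasCompactSupport_integral_rpow_sub_le
    (p := 2) (by norm_num) (f := g) (by rw [h2]; exact hg) (ε := ε / 8) (by positivity)
  rw [h2] at hhm
  set V := volume.real X
  have hV : 0 ≤ V := measureReal_nonneg
  obtain ⟨p, hp⟩ := poly_dense X hXc h hhc (Real.sqrt (ε / (8 * (V + 1)))) (by positivity)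
  refine ⟨p, ?_⟩
  have hpm : MemLp (fun y : EuclideanSpace ℝ (Fin n) => eval y p) 2 (volume.restrict X) := by
    refine ⟨(poly_cont p).aestronglyMeasurable, ?_⟩
    obtain ⟨C, hC⟩ := hXc.exists_bound_of_continuousOn (poly_cont p).continuousOn
    exact (MemLp.of_bound (poly_cont p).aestronglyMeasurable C
      ((ae_restrict_iff' hXc.measurableSet).2 (.of_forall hC))).2
  have e1 : Integrable (fun y => (g y - h y) ^ 2) (volume.restrict X) := (hg.sub hhm).integrable_sq
  have hh' : ∫ y in X, (g y - h y) ^ 2 ≤ ε / 8 := by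
    refine le_trans (le_of_eq ?_) hh
    congr 1
    ext y
    rw [Real.rpow_two, Real.norm_eq_abs, sq_abs]
  have hb : ∀ y ∈ X, (g y - eval y p) ^ 2 ≤ 2 * (g y - h y) ^ 2 + 2 * (ε / (8 * (V + 1))) := by
    intro y hy
    have h1 := hp y hy
    have h3 : (eval y p - h y) ^ 2 ≤ ε / (8 * (V + 1)) := by
      rw [← Real.sq_sqrt (show 0 ≤ ε / (8 * (V + 1)) by positivity)]
      exact sq_le_sq' (by linarith [(abs_lt.1 h1).1]) (abs_lt.1 h1).2.le
    nlinarith [sq_nonneg (g y - h y + (eval y p - h y))]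
  calc _ ≤ ∫ y in X, (2 * (g y - h y) ^ 2 + 2 * (ε / (8 * (V + 1)))) := by
        apply setIntegral_mono_on _ _ hXc.measurableSet hb
        · exact (hg.sub hpm).integrable_sq
        · exact (e1.const_mul 2).add (integrable_const _)
    _ = 2 * (∫ y in X, (g y - h y) ^ 2) + V * (2 * (ε / (8 * (V + 1)))) := by
        rw [integral_add (e1.const_mul 2) (integrable_const _), integral_const_mul]
        simp [V]
    _ < ε := by
        have : V * (2 * (ε / (8 * (V + 1)))) ≤ ε / 4 := by
          rw [show V * (2 * (ε / (8 * (V + 1)))) = (V / (V+1)) * (ε / 4) by field_simp; ring]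
          have : V / (V+1) ≤ 1 := by rw [div_le_one (by positivity)]; linarith
          nlinarith
        linarith

lemma part_two {n : ℕ}
    (X : Set (EuclideanSpace ℝ (Fin n))) (hXc : IsCompact X)
    (f : EuclideanSpace ℝ (Fin n) → ℝ) (hf : ContinuousOn f X)
    (m : ℝ) (hm : 0 < m)
    (hfm : ∀ y ∈ X, m ≤ f y)
    (φ : ℝ → EuclideanSpace ℝ (Fin n) → ℝ) (x : EuclideanSpace ℝ (Fin n)) (hx : x ∈ interior X)
    (hφpos : ∀ ε : ℝ, 0 < ε → 0 < ∫ y, (φ ε y) ^ 2)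
    (hφint : ∀ ε : ℝ, 0 < ε → Integrable (fun y => (φ ε y) ^ 2) volume)
    (hLint : ∀ ε : ℝ, 0 < ε → Integrable (fun y => (φ ε y) ^ 2 / f y) (volume.restrict X))
    (hconc : ∀ δ : ℝ, 0 < δ →
      Tendsto (fun ε => (∫ y in {y | δ < dist y x}, (φ ε y) ^ 2) / ∫ y, (φ ε y) ^ 2)
        (nhdsWithin 0 (Set.Ioi 0)) (nhds 0)) :
      Tendsto (fun ε => (∫ y in X, (φ ε y) ^ 2 / f y) / ∫ y, (φ ε y) ^ 2)
        (nhdsWithin 0 (Set.Ioi 0)) (nhds (1 / f x)) := by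
  have hxX : x ∈ X := interior_subset hx
  have hfx : 0 < f x := hm.trans_le (hfm x hxX)
  rw [Metric.tendsto_nhds]
  intro η hη
  have hc : ContinuousAt (fun y => 1 / f y) x := by
    have := hf.continuousAt (mem_interior_iff_mem_nhds.1 hx)
    exact continuousAt_const.div this hfx.ne'
  obtain ⟨δ, hδ, hδX⟩ := Metric.eventually_nhds_iff.1
    ((Metric.continuousAt_iff'.1 hc (η / 2) (by positivity)).and (mem_interior_iff_mem_nhds.1 hx))
  have hcc := (hconc (δ / 2) (by positivity)).eventually
    (gt_mem_nhds (show 0 < m * η / 2 by positivity))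
  filter_upwards [hcc, self_mem_nhdsWithin] with ε h1 hε
  have hε : 0 < ε := hε
  have hE := hφpos ε hε
  set E := ∫ y, (φ ε y) ^ 2
  set S := {y | δ / 2 < dist y x}
  have hS : MeasurableSet S := measurableSet_lt measurable_const (by fun_prop)
  set T := ∫ y in S, (φ ε y) ^ 2
  have hT : T < m * η / 2 * E := by rwa [div_lt_iff₀ hE] at h1
  have hLi : Integrable (X.indicator fun y => (φ ε y) ^ 2 / f y) volume :=
    (integrable_indicator_iff hXc.measurableSet).2 (hLint ε hε)
  have hTi : Integrable (S.indicator fun y => (φ ε y) ^ 2) volume :=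
    (hφint ε hε).indicator hS
  have key : |(∫ y in X, (φ ε y) ^ 2 / f y) - E * (1 / f x)| ≤ η / 2 * E + 1 / m * T := by
    rw [← integral_indicator hXc.measurableSet, ← integral_mul_const,
      ← integral_sub hLi ((hφint ε hε).mul_const _)]
    simp only [T, E]
    rw [← integral_indicator hS, ← integral_const_mul, ← integral_const_mul,
      ← integral_add ((hφint ε hε).const_mul _) (hTi.const_mul _), ← Real.norm_eq_abs]
    refine norm_integral_le_of_norm_le
      (((hφint ε hε).const_mul _).add (hTi.const_mul _)) (.of_forall fun y => ?_)
    have hsq := sq_nonneg (φ ε y)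
    rw [Real.norm_eq_abs]
    have hfx1 : 1 / f x ≤ 1 / m := one_div_le_one_div_of_le hm (hfm x hxX)
    have hfx0 : 0 < 1 / f x := by positivity
    by_cases hyS : y ∈ S
    · rw [Set.indicator_of_mem hyS]
      have : |X.indicator (fun y => (φ ε y) ^ 2 / f y) y - (φ ε y) ^ 2 * (1 / f x)|
          ≤ 1 / m * (φ ε y) ^ 2 := by
        by_cases hyX : y ∈ X
        · rw [Set.indicator_of_mem hyX]
          have hfy1 : 1 / f y ≤ 1 / m := one_div_le_one_div_of_le hm (hfm y hyX)
          have hfy0 : 0 < 1 / f y := one_div_pos.2 (hm.trans_le (hfm y hyX))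
          rw [show (φ ε y) ^ 2 / f y - (φ ε y) ^ 2 * (1 / f x)
            = (1 / f y - 1 / f x) * (φ ε y) ^ 2 by ring, abs_mul, abs_of_nonneg hsq]
          gcongr
          rw [abs_le]; constructor <;> linarith
        · rw [Set.indicator_of_notMem hyX, zero_sub, abs_neg, abs_of_nonneg (by positivity),
            mul_comm]
          gcongr
      have : 0 ≤ η / 2 * (φ ε y) ^ 2 := by positivity
      linarith
    · rw [Set.indicator_of_notMem hyS]
      have hd : dist y x < δ := by
        simp only [S, Set.mem_setOf_eq, not_lt] at hyS; linarith
      obtain ⟨ha, hb⟩ := hδX hd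
      rw [Set.indicator_of_mem hb]
      rw [show (φ ε y) ^ 2 / f y - (φ ε y) ^ 2 * (1 / f x)
            = (1 / f y - 1 / f x) * (φ ε y) ^ 2 by ring, abs_mul, abs_of_nonneg hsq]
      rw [Real.dist_eq] at ha
      nlinarith
  rw [Real.dist_eq, show (∫ y in X, (φ ε y) ^ 2 / f y) / E - 1 / f x
    = ((∫ y in X, (φ ε y) ^ 2 / f y) - E * (1 / f x)) / E by field_simp, abs_div, abs_of_pos hE,
    div_lt_iff₀ hE]
  have : 1 / m * T < η / 2 * E := by
    rw [one_div, inv_mul_lt_iff₀ hm]; linarith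
  linarith

lemma part_one {n : ℕ}
    (X : Set (EuclideanSpace ℝ (Fin n))) (hXc : IsCompact X)
    (hX0 : 0 < volume.real X)
    (f : EuclideanSpace ℝ (Fin n) → ℝ) (hf : ContinuousOn f X)
    (m M : ℝ) (hm : 0 < m)
    (hfm : ∀ y ∈ X, m ≤ f y) (hfM : ∀ y ∈ X, f y ≤ M)
    (φ : EuclideanSpace ℝ (Fin n) → ℝ)
    (hφ : Measurable φ)
    (hφint : Integrable (fun y => (φ y) ^ 2) volume)
    (hLint : Integrable (fun y => (φ y) ^ 2 / f y) (volume.restrict X)) :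
    Tendsto (fun d : ℕ => sSup {t : ℝ | ∃ p : MvPolynomial (Fin n) ℝ, p.totalDegree ≤ d ∧
        (∫ y in X, f y * (eval y p) ^ 2) = 1 ∧
        t = (∫ y in X, φ y * eval y p) ^ 2}) atTop (nhds (∫ y in X, (φ y) ^ 2 / f y)) := by
  have hXm := hXc.measurableSet
  have : IsFiniteMeasure (volume.restrict X : Measure (EuclideanSpace ℝ (Fin n))) :=
    ⟨by simpa using hXc.measure_lt_top⟩
  have hfae : AEMeasurable f (volume.restrict X) := hf.aemeasurable hXm
  have hφ2 : MemLp φ 2 (volume.restrict X) :=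
    (memLp_two_iff_integrable_sq hφ.aestronglyMeasurable).2 hφint.restrict
  have hg2 : MemLp (fun y => φ y / f y) 2 (volume.restrict X) := by
    have ham := (hφ.aemeasurable.div hfae).aestronglyMeasurable
    refine (hφ2.const_mul (1 / m)).mono ham ?_
    refine (ae_restrict_iff' hXm).2 (.of_forall fun y hy => ?_)
    have hfy := hfm y hy
    rw [norm_div, norm_mul, Real.norm_of_nonneg (hm.le.trans hfy),
      Real.norm_of_nonneg (show 0 ≤ 1 / m by positivity), div_eq_inv_mul, ← one_div]
    gcongr
  have hp2 : ∀ p : MvPolynomial (Fin n) ℝ,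
      MemLp (fun y : EuclideanSpace ℝ (Fin n) => eval y p) 2 (volume.restrict X) := by
    intro p
    refine ⟨(poly_cont p).aestronglyMeasurable, ?_⟩
    obtain ⟨C, hC⟩ := hXc.exists_bound_of_continuousOn (poly_cont p).continuousOn
    exact (MemLp.of_bound (poly_cont p).aestronglyMeasurable C
      ((ae_restrict_iff' hXm).2 (.of_forall hC))).2
  set L := ∫ y in X, (φ y) ^ 2 / f y
  have hexp : ∀ (p : MvPolynomial (Fin n) ℝ) (t : ℝ),
      ∫ y in X, f y * (φ y / f y - t * eval y p) ^ 2 =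
        L - 2 * t * (∫ y in X, φ y * eval y p) + t ^ 2 * ∫ y in X, f y * (eval y p) ^ 2 := by
    intro p t
    have i2 : Integrable (fun y : EuclideanSpace ℝ (Fin n) => φ y * eval y p)
      (volume.restrict X) := hφ2.integrable_mul (hp2 p)
    have i3 : Integrable (fun y : EuclideanSpace ℝ (Fin n) => f y * (eval y p) ^ 2)
      (volume.restrict X) :=
      (hf.mul ((poly_cont p).pow 2).continuousOn).integrableOn_compact hXc
    have i4 : Integrable (fun y : EuclideanSpace ℝ (Fin n) =>
      (φ y) ^ 2 / f y - 2 * t * (φ y * eval y p)) (volume.restrict X) :=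
      hLint.sub (i2.const_mul _)
    rw [← integral_const_mul, ← integral_const_mul, ← integral_sub hLint (i2.const_mul _),
      ← integral_add i4 (i3.const_mul _)]
    refine setIntegral_congr_fun hXm fun y hy => ?_
    have : f y ≠ 0 := (hm.trans_le (hfm y hy)).ne'
    simp only []
    field_simp
    ring
  have hnn : ∀ (p : MvPolynomial (Fin n) ℝ) (t : ℝ),
      0 ≤ L - 2 * t * (∫ y in X, φ y * eval y p) + t ^ 2 * ∫ y in X, f y * (eval y p) ^ 2 := by
    intro p t
    rw [← hexp]
    exact setIntegral_nonneg hXm fun y hy =>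
      mul_nonneg (hm.le.trans (hfm y hy)) (sq_nonneg _)
  have hup : ∀ d : ℕ, ∀ t ∈ {t : ℝ | ∃ p : MvPolynomial (Fin n) ℝ, p.totalDegree ≤ d ∧
        (∫ y in X, f y * (eval y p) ^ 2) = 1 ∧
        t = (∫ y in X, φ y * eval y p) ^ 2}, t ≤ L := by
    rintro d t ⟨p, -, h1, rfl⟩
    have := hnn p (∫ y in X, φ y * eval y p)
    rw [h1] at this
    linarith
  have hscale : ∀ (p : MvPolynomial (Fin n) ℝ), 0 < (∫ y in X, f y * (eval y p) ^ 2) →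
      ∀ d : ℕ, p.totalDegree ≤ d →
      (∫ y in X, φ y * eval y p) ^ 2 / (∫ y in X, f y * (eval y p) ^ 2) ∈
      {t : ℝ | ∃ p : MvPolynomial (Fin n) ℝ, p.totalDegree ≤ d ∧
        (∫ y in X, f y * (eval y p) ^ 2) = 1 ∧
        t = (∫ y in X, φ y * eval y p) ^ 2} := by
    intro p hb d hd
    set b := ∫ y in X, f y * (eval y p) ^ 2
    set s := (Real.sqrt b)⁻¹
    have hs : s ^ 2 = b⁻¹ := by rw [inv_pow, Real.sq_sqrt hb.le]
    refine ⟨C s * p, ?_, ?_, ?_⟩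
    · refine (totalDegree_mul _ _).trans ?_
      simpa using hd
    · have : ∀ y : EuclideanSpace ℝ (Fin n),
        f y * (eval y (C s * p)) ^ 2 = s ^ 2 * (f y * (eval y p) ^ 2) := by
        intro y; simp; ring
      simp_rw [this]
      rw [integral_const_mul, hs]
      exact inv_mul_cancel₀ hb.ne'
    · have : ∀ y : EuclideanSpace ℝ (Fin n),
        φ y * (eval y (C s * p)) = s * (φ y * (eval y p)) := by
        intro y; simp; ring
      simp_rw [this]
      rw [integral_const_mul, mul_pow, hs, div_eq_inv_mul]
  have hb1 : 0 < ∫ y in X, f y * (eval y (1 : MvPolynomial (Fin n) ℝ)) ^ 2 := by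
    have : m * volume.real X ≤ ∫ y in X, f y * (eval y (1 : MvPolynomial (Fin n) ℝ)) ^ 2 := by
      simp only [map_one, one_pow, mul_one]
      have h := setIntegral_mono_on (μ := volume) (integrable_const m) (hf.integrableOn_compact hXc) hXm hfm
      simpa [mul_comm] using h
    exact (mul_pos hm hX0).trans_le this
  rw [Metric.tendsto_atTop]
  intro η hη
  have hM : 0 < M := by
    have : X.Nonempty := by
      by_contra h
      rw [Set.not_nonempty_iff_eq_empty] at h
      simp [h] at hX0
    obtain ⟨y, hy⟩ := this
    exact hm.trans_le ((hfm y hy).trans (hfM y hy))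
  suffices h : ∃ N : ℕ, ∃ t ∈ {t : ℝ | ∃ p : MvPolynomial (Fin n) ℝ, p.totalDegree ≤ N ∧
        (∫ y in X, f y * (eval y p) ^ 2) = 1 ∧
        t = (∫ y in X, φ y * eval y p) ^ 2}, L - η < t by
    obtain ⟨N, t, ⟨p, hp1, hp2, hp3⟩, ht⟩ := h
    refine ⟨N, fun d hd => ?_⟩
    rw [Real.dist_eq, abs_lt]
    have hmem : t ∈ {t : ℝ | ∃ p : MvPolynomial (Fin n) ℝ, p.totalDegree ≤ d ∧
        (∫ y in X, f y * (eval y p) ^ 2) = 1 ∧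
        t = (∫ y in X, φ y * eval y p) ^ 2} := ⟨p, hp1.trans hd, hp2, hp3⟩
    have h1 := le_csSup ⟨L, hup d⟩ hmem
    have h2 := csSup_le ⟨t, hmem⟩ (hup d)
    constructor <;> linarith
  by_cases hL : L < η
  · refine ⟨0, _, hscale 1 hb1 0 (by simp), ?_⟩
    have : 0 ≤ (∫ y in X, φ y * eval y (1 : MvPolynomial (Fin n) ℝ)) ^ 2 /
      (∫ y in X, f y * (eval y (1 : MvPolynomial (Fin n) ℝ)) ^ 2) := by positivity
    linarith
  · push Not at hL
    obtain ⟨p, hp⟩ := poly_dense_L2 X hXc _ hg2 (η / M) (by positivity)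
    have h1 : ∫ y in X, f y * (φ y / f y - 1 * eval y p) ^ 2 < η := by
      have i1 : Integrable (fun y : EuclideanSpace ℝ (Fin n) => (φ y / f y - eval y p) ^ 2)
        (volume.restrict X) := (hg2.sub (hp2 p)).integrable_sq
      have : ∫ y in X, f y * (φ y / f y - 1 * eval y p) ^ 2 ≤
          ∫ y in X, M * (φ y / f y - eval y p) ^ 2 := by
        apply integral_mono_of_nonneg
        · exact (ae_restrict_iff' hXm).2 (.of_forall fun y hy =>
            mul_nonneg (hm.le.trans (hfm y hy)) (sq_nonneg _))
        · exact i1.const_mul M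
        · refine (ae_restrict_iff' hXm).2 (.of_forall fun y hy => ?_)
          simp only [one_mul]
          exact mul_le_mul_of_nonneg_right (hfM y hy) (sq_nonneg _)
      rw [integral_const_mul] at this
      rw [lt_div_iff₀ hM] at hp
      linarith
    rw [hexp] at h1
    have h2 := hnn p
    have hs := hscale p
    have hb : 0 ≤ ∫ y in X, f y * (eval y p) ^ 2 :=
      setIntegral_nonneg hXm fun y hy => mul_nonneg (hm.le.trans (hfm y hy)) (sq_nonneg _)
    set a := ∫ y in X, φ y * eval y p
    set b := ∫ y in X, f y * (eval y p) ^ 2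
    have hb' : 0 < b := by
      rcases hb.eq_or_lt with h0 | h0
      · exfalso
        rw [← h0] at h1 h2
        have ha : 0 < a := by linarith
        have := h2 ((L + 1) / (2 * a))
        have e : 2 * ((L + 1) / (2 * a)) * a = L + 1 := by field_simp
        rw [e] at this
        linarith
      · exact h0
    refine ⟨p.totalDegree, _, hs hb' _ le_rfl, ?_⟩
    rw [lt_div_iff₀ hb']
    nlinarith [sq_nonneg (a - b)]

/-- Density recovery at interior points (iterated limit): let `X ⊆ ℝⁿ` be
compact and equal to the closure of its interior, let `μ = f dλ` on `X` with
`0 < m ≤ f ≤ M` continuous, and for `x` interior to `X` and `ε > 0` let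
`φ_{x,ε}` be nonnegative square-integrable mollifiers whose `L²` energy
concentrates around `x` as `ε → 0`.  Let `D_{d,ε}(x)` be the diagonal of the
density-estimator mollified Christoffel–Darboux kernel, given by its
variational characterization.  Then for every interior point `x`, for each
`ε > 0` the inner limit `lim_{d→∞} D_{d,ε}(x)` exists and equals
`∫_X φ_{x,ε}²/f dλ`, and
`lim_{ε→0} [ (∫_X φ_{x,ε}²/f dλ) / ∫ φ_{x,ε}² dλ ] = 1/f(x)`. -/
theorem dmcd_density_recovery_iterated_limit {n : ℕ}
    (X : Set (EuclideanSpace ℝ (Fin n))) (hXc : IsCompact X)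
    (hXreg : X = closure (interior X))
    (f : EuclideanSpace ℝ (Fin n) → ℝ) (hf : ContinuousOn f X)
    (m M : ℝ) (hm : 0 < m)
    (hfm : ∀ y ∈ X, m ≤ f y) (hfM : ∀ y ∈ X, f y ≤ M)
    (μ : Measure (EuclideanSpace ℝ (Fin n)))
    (hμ : μ = (volume.restrict X).withDensity fun y => ENNReal.ofReal (f y))
    (φ : EuclideanSpace ℝ (Fin n) → ℝ → EuclideanSpace ℝ (Fin n) → ℝ)
    (hφmeas : ∀ x ∈ interior X, ∀ ε : ℝ, 0 < ε → Measurable (φ x ε))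
    (hφnn : ∀ x ∈ interior X, ∀ ε : ℝ, 0 < ε → ∀ y, 0 ≤ φ x ε y)
    (hφpos : ∀ x ∈ interior X, ∀ ε : ℝ, 0 < ε → 0 < ∫ y, (φ x ε y) ^ 2)
    (hφint : ∀ x ∈ interior X, ∀ ε : ℝ, 0 < ε →
      Integrable (fun y => (φ x ε y) ^ 2) volume)
    (hconc : ∀ x ∈ interior X, ∀ δ : ℝ, 0 < δ →
      Tendsto (fun ε => (∫ y in {y | δ < dist y x}, (φ x ε y) ^ 2) /
          ∫ y, (φ x ε y) ^ 2)
        (nhdsWithin 0 (Set.Ioi 0)) (nhds 0))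
    (D : ℕ → ℝ → EuclideanSpace ℝ (Fin n) → ℝ)
    (hD : ∀ d ε x, D d ε x =
      sSup {t : ℝ | ∃ p : MvPolynomial (Fin n) ℝ, p.totalDegree ≤ d ∧
        (∫ y, (eval y p) ^ 2 ∂μ) = 1 ∧
        t = (∫ y in X, φ x ε y * eval y p) ^ 2}) :
    ∀ x ∈ interior X,
      (∀ ε : ℝ, 0 < ε →
        Tendsto (fun d => D d ε x) atTop
          (nhds (∫ y in X, (φ x ε y) ^ 2 / f y))) ∧
      Tendsto (fun ε => (∫ y in X, (φ x ε y) ^ 2 / f y) / ∫ y, (φ x ε y) ^ 2)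
        (nhdsWithin 0 (Set.Ioi 0)) (nhds (1 / f x)) := by
  intro x hx
  have hXm := hXc.measurableSet
  have hfae : AEMeasurable f (volume.restrict X) := hf.aemeasurable hXm
  have hLint : ∀ ε : ℝ, 0 < ε →
      Integrable (fun y => (φ x ε y) ^ 2 / f y) (volume.restrict X) := by
    intro ε hε
    refine ((hφint x hx ε hε).restrict.const_mul (1 / m)).mono'
      ((((hφmeas x hx ε hε).pow_const 2).aemeasurable.div hfae).aestronglyMeasurable) ?_
    refine (ae_restrict_iff' hXm).2 (.of_forall fun y hy => ?_)
    have hfy := hfm y hy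
    rw [norm_div, Real.norm_of_nonneg (hm.le.trans hfy), Real.norm_of_nonneg (sq_nonneg _),
      div_eq_inv_mul, ← one_div]
    gcongr
  refine ⟨fun ε hε => ?_, part_two X hXc f hf m hm hfm (φ x) x hx (hφpos x hx) (hφint x hx)
    hLint (hconc x hx)⟩
  have hX0 : 0 < volume.real X := by
    refine ENNReal.toReal_pos (ne_of_gt ?_) hXc.measure_lt_top.ne
    exact (isOpen_interior.measure_pos volume ⟨x, hx⟩).trans_le (measure_mono interior_subset)
  have h := part_one X hXc hX0 f hf m M hm hfm hfM (φ x ε) (hφmeas x hx ε hε)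
    (hφint x hx ε hε) (hLint ε hε)
  refine h.congr fun d => ?_
  rw [hD]
  have hi : ∀ p : MvPolynomial (Fin n) ℝ,
      (∫ y, (eval y p) ^ 2 ∂μ) = ∫ y in X, f y * (eval y p) ^ 2 := by
    intro p
    rw [hμ, integral_withDensity_eq_integral_toReal_smul₀ hfae.ennreal_ofReal
      (.of_forall fun _ => ENNReal.ofReal_lt_top)]
    refine setIntegral_congr_fun hXm fun y hy => ?_
    simp only [smul_eq_mul]
    rw [ENNReal.toReal_ofReal (hm.le.trans (hfm y hy))]
  simp_rw [hi]
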